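/- arXiv:1612.01951 — 5 statements merged into one kernel-verified Lean document; each statement's English description precedes it below -/
import Mathlib

section
/- For every z ∈ ℂ, the function Φ has complex derivative (2π)^{-1/2} · exp(−z²/2) at z; i.e. HasDerivAt Φ ((2π)^{-1/2}·exp(−z²/2)) z. -/
/-!
The entire function `w ↦ exp (-w ^ 2 / 2)` has a primitive `F` on `ℂ`. Along the segment
`t ↦ t * z` the integrand defining `Phi z` is the derivative of `t ↦ F (t * z)`, so by the
fundamental theorem of calculus `Phi` equals `1 / 2 + (√(2π))⁻¹ * (F z - F 0)`.
Differentiating this expression gives the claim.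
-/

open Complex intervalIntegral

/-- The analytic extension of the standard normal CDF to the complex plane:
`Φ(z) = 1/2 + (2π)^{-1/2} ∫_{t=0}^{1} z · exp(−(t·z)²/2) dt`. -/
noncomputable def Phi (z : ℂ) : ℂ :=
  1 / 2 + ((Real.sqrt (2 * Real.pi))⁻¹ : ℂ) *
    ∫ t in (0:ℝ)..1, z * Complex.exp (-((t : ℂ) * z) ^ 2 / 2)

/-- `Φ` has complex derivative `(2π)^{-1/2}·exp(−z²/2)` at every `z ∈ ℂ`. -/
theorem Phi_hasDerivAt (z : ℂ) :
    HasDerivAt Phi (((Real.sqrt (2 * Real.pi))⁻¹ : ℂ) * Complex.exp (-z ^ 2 / 2)) z := by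
  obtain ⟨F, hF⟩ : ∃ F : ℂ → ℂ, ∀ w, HasDerivAt F (Complex.exp (-w ^ 2 / 2)) w := by
    have hd : Differentiable ℂ fun w : ℂ => Complex.exp (-w ^ 2 / 2) := by fun_prop
    obtain ⟨F, hF⟩ := hd.isExactOn_univ
    exact ⟨F, fun w => hF w (Set.mem_univ w)⟩
  have hPhi : Phi = fun w => 1 / 2 + ((Real.sqrt (2 * Real.pi))⁻¹ : ℂ) * (F w - F 0) := by
    funext w
    have hint : ∫ t in (0:ℝ)..1, w * Complex.exp (-((t : ℂ) * w) ^ 2 / 2) = F w - F 0 := by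
      have hderiv (t : ℝ) : HasDerivAt (fun s : ℝ => F ((s : ℂ) * w))
          (w * Complex.exp (-((t : ℂ) * w) ^ 2 / 2)) t := by
        have hseg : HasDerivAt (fun s : ℂ => s * w) w (t : ℂ) := by
          simpa using (hasDerivAt_id (t : ℂ)).mul_const w
        have hcomp := ((hF ((t : ℂ) * w)).comp (t : ℂ) hseg).comp_ofReal
        rw [mul_comm] at hcomp
        exact hcomp
      have hcont : Continuous fun t : ℝ => w * Complex.exp (-((t : ℂ) * w) ^ 2 / 2) := by
        fun_prop
      rw [integral_eq_sub_of_hasDerivAt (fun t _ => hderiv t) (hcont.intervalIntegrable 0 1)]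
      simp
    rw [Phi, hint]
  rw [hPhi]
  exact (((hF z).sub_const (F 0)).const_mul _).const_add _
end

section
/- The complex normal CDF is unbounded along the imaginary axis: the function y ↦ ‖Φ(i·y)‖ (y real) tends to +∞ as y → +∞, and also tends to +∞ as y → −∞. Consequently Φ tends to no finite limit and to no infinite limit at z = ∞, so ∞ is an essential singularity of Φ. -/
/-!
On the imaginary axis the integrand is `i y · exp(t² y² / 2)`, so the imaginary part of `Φ(iy)` is
`(2π)^{-1/2} · y · ∫₀¹ exp(t² y² / 2) dt`, whose absolute value is at least `(2π)^{-1/2} |y|`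
(`Phi_norm_lower`). On the positive real axis, substituting `s = t x` bounds the integral by
`∫_ℝ exp(-s² / 2) ds < ∞`, so `Φ` is bounded there (`exists_Phi_bound`). Both half-axes leave every
compact set, so the first bound excludes a finite limit at `∞` and the second an infinite one.
-/

open Complex intervalIntegral

/-- The integral defining `Φ(iy)` is `i y` times a real number that is at least `1`, so the
imaginary part of `Φ(iy)` already has this size. -/
lemma Phi_norm_lower (y : ℝ) :
    (Real.sqrt (2 * Real.pi))⁻¹ * |y| ≤ ‖Phi (Complex.I * (y : ℂ))‖ := by
  set J : ℝ := ∫ t in (0:ℝ)..1, Real.exp ((t * y) ^ 2 / 2) with hJ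
  have hJ1 : 1 ≤ J := by
    have h : ∫ _ in (0:ℝ)..1, (1:ℝ) ≤ J := by
      apply integral_mono_on zero_le_one
      · exact intervalIntegrable_const
      · exact (by fun_prop : Continuous fun t : ℝ =>
          Real.exp ((t * y) ^ 2 / 2)).intervalIntegrable _ _
      · intro t _
        exact Real.one_le_exp (by positivity)
    simpa using h
  have hPhi : Phi (Complex.I * (y : ℂ)) =
      1 / 2 + (((Real.sqrt (2 * Real.pi))⁻¹ * (y * J) : ℝ) : ℂ) * Complex.I := by
    have hint : ∀ t : ℝ, Complex.I * (y : ℂ) *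
        Complex.exp (-((t : ℂ) * (Complex.I * (y : ℂ))) ^ 2 / 2) =
        Complex.I * (y : ℂ) * ((Real.exp ((t * y) ^ 2 / 2) : ℝ) : ℂ) := by
      intro t
      push_cast
      congr 3
      linear_combination (-(t : ℂ) ^ 2 * (y : ℂ) ^ 2) * Complex.I_sq
    unfold Phi
    simp only [hint]
    rw [intervalIntegral.integral_const_mul, intervalIntegral.integral_ofReal, ← hJ]
    push_cast
    ring
  have him : (Phi (Complex.I * (y : ℂ))).im = (Real.sqrt (2 * Real.pi))⁻¹ * (y * J) := by
    rw [hPhi]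
    simp only [Complex.add_im, Complex.im_ofReal_mul, Complex.I_im, mul_one]
    norm_num
  refine le_trans ?_ (Complex.abs_im_le_norm _)
  rw [him, abs_mul, abs_mul, abs_of_nonneg (by positivity : 0 ≤ (Real.sqrt (2 * Real.pi))⁻¹),
    abs_of_nonneg (zero_le_one.trans hJ1)]
  gcongr
  exact le_mul_of_one_le_right (abs_nonneg y) hJ1

/-- `Φ` is bounded on the positive real axis, because the Gaussian is integrable. -/
lemma exists_Phi_bound : ∃ M : ℝ, ∀ x : ℝ, 0 ≤ x → ‖Phi (x : ℂ)‖ ≤ M := by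
  have hG : MeasureTheory.Integrable fun s : ℝ => Real.exp (-s ^ 2 / 2) := by
    refine (integrable_exp_neg_mul_sq (b := 1 / 2) (by norm_num)).congr
      (Filter.Eventually.of_forall fun s => ?_)
    simp only
    congr 1
    ring
  refine ⟨1 / 2 + (Real.sqrt (2 * Real.pi))⁻¹ * ∫ s : ℝ, Real.exp (-s ^ 2 / 2), fun x hx => ?_⟩
  have hI : ‖∫ t in (0:ℝ)..1, (x : ℂ) * Complex.exp (-((t : ℂ) * (x : ℂ)) ^ 2 / 2)‖ ≤
      ∫ s : ℝ, Real.exp (-s ^ 2 / 2) := by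
    have hint : ∀ t : ℝ, (x : ℂ) * Complex.exp (-((t : ℂ) * (x : ℂ)) ^ 2 / 2) =
        ((x * Real.exp (-(t * x) ^ 2 / 2) : ℝ) : ℂ) := by
      intro t
      push_cast
      rfl
    simp only [hint]
    rw [intervalIntegral.integral_ofReal, Complex.norm_real, intervalIntegral.integral_const_mul,
      intervalIntegral.mul_integral_comp_mul_right (f := fun s : ℝ => Real.exp (-s ^ 2 / 2)),
      zero_mul, one_mul, integral_of_le hx, Real.norm_of_nonneg
        (MeasureTheory.integral_nonneg fun s => (Real.exp_pos _).le)]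
    exact MeasureTheory.setIntegral_le_integral hG
      (Filter.Eventually.of_forall fun s => (Real.exp_pos _).le)
  unfold Phi
  refine (norm_add_le _ _).trans (add_le_add (by norm_num) ?_)
  rw [norm_mul, norm_inv, Complex.norm_real, Real.norm_of_nonneg (Real.sqrt_nonneg _)]
  gcongr

open Filter in
/-- `‖Φ(i·y)‖ → +∞` as `y → ±∞`; consequently `Φ` tends to no finite limit
and to no infinite limit at `z = ∞` (the cocompact filter on `ℂ`), so `∞` is an
essential singularity of `Φ`. -/
theorem Phi_unbounded_on_imaginary_axis :
    Tendsto (fun y : ℝ => ‖Phi (Complex.I * (y : ℂ))‖) atTop atTop ∧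
    Tendsto (fun y : ℝ => ‖Phi (Complex.I * (y : ℂ))‖) atBot atTop ∧
    (¬ ∃ c : ℂ, Tendsto Phi (cocompact ℂ) (nhds c)) ∧
    ¬ Tendsto (fun z : ℂ => ‖Phi z‖) (cocompact ℂ) atTop := by
  have hc : 0 < (Real.sqrt (2 * Real.pi))⁻¹ := by positivity
  have hTop : Tendsto (fun y : ℝ => ‖Phi (Complex.I * (y : ℂ))‖) atTop atTop :=
    tendsto_atTop_mono Phi_norm_lower (tendsto_abs_atTop_atTop.const_mul_atTop hc)
  have hBot : Tendsto (fun y : ℝ => ‖Phi (Complex.I * (y : ℂ))‖) atBot atTop :=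
    tendsto_atTop_mono Phi_norm_lower (tendsto_abs_atBot_atTop.const_mul_atTop hc)
  refine ⟨hTop, hBot, ?_, ?_⟩
  · rintro ⟨c, h⟩
    have hy : Tendsto (fun y : ℝ => Complex.I * (y : ℂ)) atTop (cocompact ℂ) := by
      rw [← Metric.cobounded_eq_cocompact, ← tendsto_norm_atTop_iff_cobounded]
      simpa using tendsto_abs_atTop_atTop
    exact not_tendsto_nhds_of_tendsto_atTop hTop _ (h.comp hy).norm
  · intro h
    have hx : Tendsto (fun x : ℝ => (x : ℂ)) atTop (cocompact ℂ) := by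
      rw [← Metric.cobounded_eq_cocompact, ← tendsto_norm_atTop_iff_cobounded]
      simpa using tendsto_abs_atTop_atTop
    obtain ⟨M, hM⟩ := exists_Phi_bound
    obtain ⟨x, hxM, hx0⟩ :=
      (((h.comp hx).eventually_gt_atTop M).and (eventually_ge_atTop 0)).exists
    exact (hM x hx0).not_gt hxM
end

section
/- Let r ∈ ℝ and F, K, T ∈ ℝ with F > 0, K > 0, T > 0, and let f be the complex Black-Scholes call price. Then as σ approaches 0 from the right along the positive real axis, f(σ) tends to e^{−rT}·max(F − K, 0); that is, the restriction of f to positive reals has right-limit e^{−rT}(F−K) at 0 when F ≥ K and 0 when F ≤ K. -/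
/-!
On the real line the substitution `s = t x` turns `Φ` into the usual normal distribution function
`x ↦ 1/2 + (2π)^{-1/2} ∫₀ˣ e^{-s²/2} ds` (`Phi_ofReal`). This function is continuous, equals `1/2`
at `0`, and tends to `1` at `+∞` by the half-line Gaussian integral, hence to `0` at `-∞` by
symmetry. As `σ → 0⁺`, both `d₊(σ)` and `d₋(σ)` are `log(F/K)/(σ√T)` plus a term tending to `0`,
so they both tend to `+∞`, `0` or `-∞` according to the sign of `log(F/K)`. The price therefore
tends to `e^{-rT}` times `F - K`, `(F - K)/2 = 0` or `0` respectively.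
-/

open Complex intervalIntegral

/-- `d₊(σ) = log(F/K)/(σ√T) + σ√T/2`. -/
noncomputable def dPlus (F K T : ℝ) (σ : ℂ) : ℂ :=
  (Real.log (F / K) : ℂ) / (σ * (Real.sqrt T : ℂ)) + σ * (Real.sqrt T : ℂ) / 2

/-- `d₋(σ) = log(F/K)/(σ√T) − σ√T/2`. -/
noncomputable def dMinus (F K T : ℝ) (σ : ℂ) : ℂ :=
  (Real.log (F / K) : ℂ) / (σ * (Real.sqrt T : ℂ)) - σ * (Real.sqrt T : ℂ) / 2

/-- The complex Black-Scholes call price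
`f(σ) = e^{−rT}·(F·Φ(d₊(σ)) − K·Φ(d₋(σ)))`. -/
noncomputable def BS (r F K T : ℝ) (σ : ℂ) : ℂ :=
  (Real.exp (-(r * T)) : ℂ) * ((F : ℂ) * Phi (dPlus F K T σ) - (K : ℂ) * Phi (dMinus F K T σ))

open Filter Topology

/-- The standard normal distribution function on the real line, written as an integral from `0`. -/
noncomputable def realPhi (x : ℝ) : ℝ :=
  1 / 2 + (Real.sqrt (2 * Real.pi))⁻¹ * ∫ s in (0:ℝ)..x, Real.exp (-(1 / 2) * s ^ 2)

theorem Phi_ofReal (x : ℝ) : Phi (x : ℂ) = (realPhi x : ℂ) := by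
  have h1 : ∀ t : ℝ, (x : ℂ) * Complex.exp (-((t : ℂ) * x) ^ 2 / 2)
      = ((x * Real.exp (-(1 / 2) * (t * x) ^ 2) : ℝ) : ℂ) := by
    intro t
    push_cast
    congr 2
    ring
  have h2 : ∫ t in (0:ℝ)..1, x * Real.exp (-(1 / 2) * (t * x) ^ 2)
      = ∫ s in (0:ℝ)..x, Real.exp (-(1 / 2) * s ^ 2) := by
    rw [intervalIntegral.integral_const_mul,
      intervalIntegral.mul_integral_comp_mul_right (f := fun s => Real.exp (-(1 / 2) * s ^ 2))]
    simp
  unfold Phi realPhi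
  simp_rw [h1]
  rw [intervalIntegral.integral_ofReal, h2]
  push_cast
  rfl

theorem continuous_realPhi : Continuous realPhi := by
  have hc : Continuous fun s : ℝ => Real.exp (-(1 / 2) * s ^ 2) := by fun_prop
  unfold realPhi
  exact continuous_const.add (continuous_const.mul
    (intervalIntegral.continuous_primitive (fun a b => hc.intervalIntegrable a b) 0))

theorem realPhi_zero : realPhi 0 = 1 / 2 := by simp [realPhi]

theorem realPhi_neg (x : ℝ) : realPhi (-x) = 1 - realPhi x := by
  have h := intervalIntegral.integral_comp_neg (a := 0) (b := x)
    (fun s : ℝ => Real.exp (-(1 / 2) * s ^ 2))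
  simp only [neg_sq, neg_zero] at h
  unfold realPhi
  rw [intervalIntegral.integral_symm, ← h]
  ring

theorem tendsto_realPhi_atTop : Tendsto realPhi atTop (𝓝 1) := by
  have h := MeasureTheory.intervalIntegral_tendsto_integral_Ioi (0 : ℝ)
    (integrable_exp_neg_mul_sq (b := 1 / 2) (by norm_num)).integrableOn tendsto_id
  rw [integral_gaussian_Ioi] at h
  have h' := (h.const_mul (Real.sqrt (2 * Real.pi))⁻¹).const_add (1 / 2)
  have hp : Real.sqrt (2 * Real.pi) ≠ 0 := by positivity
  have e : Real.pi / (1 / 2) = 2 * Real.pi := by ring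
  have e2 : (1 / 2 : ℝ) + (Real.sqrt (2 * Real.pi))⁻¹ * (Real.sqrt (2 * Real.pi) / 2) = 1 := by
    field_simp
    norm_num
  rw [e, e2] at h'
  exact h'

theorem tendsto_realPhi_atBot : Tendsto realPhi atBot (𝓝 0) := by
  have h := (tendsto_realPhi_atTop.comp tendsto_neg_atBot_atTop).const_sub 1
  rw [sub_self] at h
  refine h.congr fun x => ?_
  simp [realPhi_neg]

/-- A common limit `L` of `Φ(d₊)` and `Φ(d₋)` along a filter determines the limit of the price.
The hypothesis is only used at `ε = 1` (giving `d₊`) and `ε = -1` (giving `d₋`). -/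
theorem tendsto_BS_of_realPhi (r F K T L : ℝ) (l : Filter ℝ)
    (h : ∀ ε : ℝ, Tendsto (fun σ : ℝ => realPhi
      (Real.log (F / K) * (σ * √T)⁻¹ + ε * (σ * √T / 2))) l (𝓝 L)) :
    Tendsto (fun σ : ℝ => BS r F K T (σ : ℂ)) l
      (𝓝 ((Real.exp (-(r * T)) * ((F - K) * L) : ℝ) : ℂ)) := by
  have h1 := (((h 1).const_mul F).sub ((h (-1)).const_mul K)).const_mul (Real.exp (-(r * T)))
  rw [← sub_mul] at h1
  refine ((Complex.continuous_ofReal.tendsto _).comp h1).congr fun σ => ?_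
  have hp : dPlus F K T σ
      = ((Real.log (F / K) * (σ * √T)⁻¹ + 1 * (σ * √T / 2) : ℝ) : ℂ) := by
    unfold dPlus
    push_cast
    ring
  have hm : dMinus F K T σ
      = ((Real.log (F / K) * (σ * √T)⁻¹ + (-1) * (σ * √T / 2) : ℝ) : ℂ) := by
    unfold dMinus
    push_cast
    ring
  unfold BS
  rw [hp, hm, Phi_ofReal, Phi_ofReal]
  simp only [Function.comp]
  norm_cast

open Filter in
/-- as `σ → 0⁺` along the positive real axis, `f(σ) → e^{−rT}·max(F − K, 0)`. -/
theorem BS_limit_zero_from_right (r F K T : ℝ) (hF : 0 < F) (hK : 0 < K) (hT : 0 < T) :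
    Tendsto (fun σ : ℝ => BS r F K T (σ : ℂ)) (nhdsWithin 0 (Set.Ioi 0))
      (nhds ((Real.exp (-(r * T)) * max (F - K) 0 : ℝ) : ℂ)) := by
  have hs : 0 < √T := Real.sqrt_pos.mpr hT
  have hsmall : ∀ ε : ℝ, Tendsto (fun σ : ℝ => ε * (σ * √T / 2)) (𝓝[>] 0) (𝓝 0) := by
    intro ε
    have hc : Continuous fun σ : ℝ => ε * (σ * √T / 2) := by fun_prop
    simpa using (hc.tendsto 0).mono_left nhdsWithin_le_nhds
  have hbig : Tendsto (fun σ : ℝ => (σ * √T)⁻¹) (𝓝[>] 0) atTop := by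
    have := (tendsto_inv_nhdsGT_zero (𝕜 := ℝ)).atTop_mul_const (inv_pos.mpr hs)
    exact this.congr fun σ => (mul_inv _ _).symm
  rcases lt_trichotomy F K with hlt | heq | hgt
  · have ha : Real.log (F / K) < 0 := Real.log_neg (by positivity) ((div_lt_one hK).mpr hlt)
    rw [max_eq_right (by linarith)]
    have := tendsto_BS_of_realPhi r F K T 0 (𝓝[>] 0) fun ε =>
      tendsto_realPhi_atBot.comp ((hbig.const_mul_atTop_of_neg ha).atBot_add (hsmall ε))
    simpa using this
  · subst heq
    have := tendsto_BS_of_realPhi r F F T (1 / 2) (𝓝[>] 0) fun ε => by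
      have h0 := (continuous_realPhi.tendsto 0).comp (hsmall ε)
      rw [realPhi_zero] at h0
      simpa [div_self hF.ne', Function.comp_def] using h0
    simpa using this
  · have ha : 0 < Real.log (F / K) := Real.log_pos ((one_lt_div hK).mpr hgt)
    rw [max_eq_left (by linarith)]
    have := tendsto_BS_of_realPhi r F K T 1 (𝓝[>] 0) fun ε =>
      tendsto_realPhi_atTop.comp ((hbig.const_mul_atTop ha).atTop_add (hsmall ε))
    simpa using this
end

section
/- Let r ∈ ℝ and F, K, T ∈ ℝ with F > 0, K > 0, T > 0, and let f be the complex Black-Scholes call price. Then as σ approaches 0 from the left along the negative real axis, f(σ) tends to e^{−rT}·min(F − K, 0); that is, the restriction of f to negative reals has left-limit 0 at 0 when F ≥ K and e^{−rT}(F−K) when F ≤ K. -/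
/-!
On the real axis `Phi` is the usual normal distribution function, so by the Gaussian integral
(`Phi_tendsto_atTop`) and the reflection `Phi (-z) = 1 - Phi z` it tends to `1` at `+∞` and to `0`
at `-∞`. For real `σ < 0` tending to `0`, both `d₊` and `d₋` differ by terms tending to `0`
from `log (F / K) / (σ √T)`. When `F > K` this quotient tends to `-∞`, so both values of `Phi`
tend to `0`; when `F < K` it tends to `+∞`, so both tend to `1` and the price tends to
`e^{-rT} (F - K)`; when `F = K` it vanishes identically, both values tend to `Phi 0`, and their
contributions cancel.
-/


open Complex intervalIntegral

open Filter Topology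

/-- Substituting `s = t x` identifies `Phi` on the real axis with the real Gaussian integral. -/
lemma Phi_ofReal_s9 (x : ℝ) :
    Phi (x : ℂ) = ((1 / 2 + (Real.sqrt (2 * Real.pi))⁻¹ *
      ∫ s in (0:ℝ)..x, Real.exp (-(1 / 2) * s ^ 2) : ℝ) : ℂ) := by
  have h : (∫ t in (0:ℝ)..1, (x : ℂ) * Complex.exp (-((t : ℂ) * x) ^ 2 / 2))
      = ((∫ s in (0:ℝ)..x, Real.exp (-(1 / 2) * s ^ 2) : ℝ) : ℂ) := by
    have h2 := smul_integral_comp_mul_left (a := 0) (b := 1)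
      (fun s : ℝ => Real.exp (-(1 / 2) * s ^ 2)) x
    rw [mul_zero, mul_one, smul_eq_mul, ← intervalIntegral.integral_const_mul] at h2
    rw [← h2, ← intervalIntegral.integral_ofReal]
    congr 1
    ext t
    push_cast
    ring_nf
  rw [Phi, h]
  push_cast
  rfl

lemma Phi_neg (z : ℂ) : Phi (-z) = 1 - Phi z := by
  have h : (∫ t in (0:ℝ)..1, -z * Complex.exp (-((t : ℂ) * -z) ^ 2 / 2))
      = -∫ t in (0:ℝ)..1, z * Complex.exp (-((t : ℂ) * z) ^ 2 / 2) := by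
    rw [← intervalIntegral.integral_neg]
    congr 1
    ext t
    ring_nf
  rw [Phi, Phi, h]
  ring

lemma Phi_tendsto_atTop : Tendsto (fun x : ℝ => Phi (x : ℂ)) atTop (𝓝 1) := by
  have hi : MeasureTheory.IntegrableOn (fun s : ℝ => Real.exp (-(1 / 2) * s ^ 2)) (Set.Ioi 0) :=
    (integrable_exp_neg_mul_sq (by norm_num : (0:ℝ) < 1 / 2)).integrableOn
  have h := MeasureTheory.intervalIntegral_tendsto_integral_Ioi 0 hi tendsto_id
  rw [integral_gaussian_Ioi] at h
  have h2 := ((h.const_mul (Real.sqrt (2 * Real.pi))⁻¹).const_add (1 / 2)).ofReal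
  have h0 : Real.sqrt (2 * Real.pi) ≠ 0 := by positivity
  have h3 : (1 / 2 + (Real.sqrt (2 * Real.pi))⁻¹ * (Real.sqrt (Real.pi / (1 / 2)) / 2) : ℝ) = 1 := by
    rw [show Real.pi / (1 / 2) = 2 * Real.pi by ring]
    field_simp
    norm_num
  rw [h3, Complex.ofReal_one] at h2
  exact h2.congr fun x => (Phi_ofReal_s9 x).symm

lemma Phi_tendsto_atBot : Tendsto (fun x : ℝ => Phi (x : ℂ)) atBot (𝓝 0) := by
  have h := (Phi_tendsto_atTop.comp tendsto_neg_atBot_atTop).const_sub 1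
  rw [sub_self] at h
  refine h.congr fun x => ?_
  rw [Function.comp_apply, Complex.ofReal_neg, Phi_neg, sub_sub_cancel]

/-- Continuity of `Phi` at the origin along the real axis, needed only at the money. -/
lemma Phi_tendsto_zero : Tendsto (fun x : ℝ => Phi (x : ℂ)) (𝓝 0) (𝓝 (Phi 0)) := by
  have hc : Continuous fun x : ℝ => ∫ s in (0:ℝ)..x, Real.exp (-(1 / 2) * s ^ 2) :=
    intervalIntegral.continuous_primitive
      (fun a b => (by fun_prop : Continuous fun s : ℝ =>
        Real.exp (-(1 / 2) * s ^ 2)).intervalIntegrable a b) 0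
  have h : Continuous fun x : ℝ => Phi (x : ℂ) := by
    simp_rw [Phi_ofReal_s9]
    fun_prop
  simpa using h.tendsto 0

/-- If both arguments, restricted to real `σ < 0`, follow a filter along which `Phi` tends to `c`,
then the price tends to `e^{-rT} (F c - K c)`. -/
lemma BS_tendsto_of_args {r F K T : ℝ} {l : Filter ℝ} {c : ℂ}
    (hl : Tendsto (fun x : ℝ => Phi (x : ℂ)) l (𝓝 c))
    (hp : Tendsto (fun σ : ℝ => Real.log (F / K) / (σ * Real.sqrt T) + σ * Real.sqrt T / 2)
      (𝓝[<] 0) l)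
    (hm : Tendsto (fun σ : ℝ => Real.log (F / K) / (σ * Real.sqrt T) - σ * Real.sqrt T / 2)
      (𝓝[<] 0) l) :
    Tendsto (fun σ : ℝ => BS r F K T (σ : ℂ)) (𝓝[<] 0)
      (𝓝 ((Real.exp (-(r * T)) : ℂ) * ((F : ℂ) * c - (K : ℂ) * c))) := by
  have h := (((hl.comp hp).const_mul (F : ℂ)).sub
    ((hl.comp hm).const_mul (K : ℂ))).const_mul (Real.exp (-(r * T)) : ℂ)
  refine h.congr fun σ => ?_
  simp [BS, dPlus, dMinus]

open Filter in
/-- as `σ → 0⁻` along the negative real axis, `f(σ) → e^{−rT}·min(F − K, 0)`. -/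
theorem BS_limit_zero_from_left (r F K T : ℝ) (hF : 0 < F) (hK : 0 < K) (hT : 0 < T) :
    Tendsto (fun σ : ℝ => BS r F K T (σ : ℂ)) (nhdsWithin 0 (Set.Iio 0))
      (nhds ((Real.exp (-(r * T)) * min (F - K) 0 : ℝ) : ℂ)) := by
  have hs : 0 < Real.sqrt T := Real.sqrt_pos.2 hT
  have hz : Tendsto (fun σ : ℝ => σ * Real.sqrt T / 2) (𝓝[<] 0) (𝓝 0) := by
    have : Continuous fun σ : ℝ => σ * Real.sqrt T / 2 := by fun_prop
    simpa using (this.tendsto 0).mono_left nhdsWithin_le_nhds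
  have hinv : Tendsto (fun σ : ℝ => σ⁻¹) (𝓝[<] 0) atBot := tendsto_inv_nhdsLT_zero
  have hq : (fun σ : ℝ => Real.log (F / K) / (σ * Real.sqrt T))
      = fun σ : ℝ => (Real.log (F / K) / Real.sqrt T) * σ⁻¹ := by
    ext σ
    rw [mul_comm σ, ← div_div, div_eq_mul_inv]
  rcases lt_trichotomy F K with h | h | h
  · have hlog : Real.log (F / K) < 0 := Real.log_neg (by positivity) ((div_lt_one hK).2 h)
    have hd : Tendsto (fun σ : ℝ => Real.log (F / K) / (σ * Real.sqrt T)) (𝓝[<] 0) atTop := by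
      rw [hq]
      exact hinv.const_mul_atBot_of_neg (div_neg_of_neg_of_pos hlog hs)
    have := BS_tendsto_of_args (r := r) Phi_tendsto_atTop (hd.atTop_add hz)
      (by simpa only [sub_eq_add_neg] using hd.atTop_add hz.neg)
    rw [min_eq_left (by linarith)]
    simpa using this
  · subst h
    have := BS_tendsto_of_args (r := r) (F := F) (K := F) (T := T) Phi_tendsto_zero
      (by simpa [hF.ne'] using hz) (by simpa [hF.ne'] using hz.neg)
    simpa using this
  · have hlog : 0 < Real.log (F / K) := Real.log_pos ((one_lt_div hK).2 h)
    have hd : Tendsto (fun σ : ℝ => Real.log (F / K) / (σ * Real.sqrt T)) (𝓝[<] 0) atBot := by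
      rw [hq]
      exact hinv.const_mul_atBot (div_pos hlog hs)
    have := BS_tendsto_of_args (r := r) Phi_tendsto_atBot (hd.atBot_add hz)
      (by simpa only [sub_eq_add_neg] using hd.atBot_add hz.neg)
    rw [min_eq_right (by linarith)]
    simpa using this
end

section
/- Let r ∈ ℝ and F, K, T ∈ ℝ with F > 0, K > 0, T > 0, F ≠ K, and let f be the complex Black-Scholes call price. Then there exists a set E ⊆ ℂ containing at most one point such that for every V ∈ ℂ \ E and for every ε > 0, the set {σ ∈ ℂ : 0 < ‖σ‖ < ε and f(σ) = V} is infinite; i.e. in each punctured neighbourhood of 0 the implied-volatility equation f(σ) = V has infinitely many complex solutions. -/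
/-!
In the variable `w = 1 / σ` the price `h(w) = f(1 / w)` has the zero-free derivative
`h'(w) = C w⁻² exp (-b w² - d / w²)` with `b = log (F / K)² / (2 T) > 0` (`hasDerivAt_BS_inv`),
and the claim concerns the values of `h` near infinity. Instead of the great Picard theorem, the
proof uses a renormalisation along a sequence escaping to infinity on the ray `w² ∈ i ℝ₊`, where
`|exp (-b w²)| = 1`.

Let `q = ω s` with `ω² = i` and `exp (-b q²) = 1`. Then `t ↦ h(q + t / q)` has derivative close to
`C q⁻³ exp (-2 b t)` (`hasDerivAt_zoom`, `eventually_zoomFactor_close`). Re-centring at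
`t = -(3 / (2 b)) log s` cancels the factor `s⁻³`, so the resulting functions `g` have derivatives
converging locally uniformly to `κ exp (-2 b x)`, where `κ = C / ω³`. Their values at `0` are
bounded: `h'` is integrable along the ray (`bounded_on_ray`) and between `q` and the new centre it
grows exponentially up to size `O(1)` (`bounded_along_shift`). Hence a subsequence of the `g`
converges locally uniformly to `L + κ / (2 b) * (1 - exp (-2 b x))`, an entire function omitting
the single value `L + κ / (2 b)`. Every other value is taken by `g` far along the subsequence, by
the quantitative open mapping theorem `DiffContOnCl.ball_subset_image_closedBall`, so it is taken
by `h` at points of arbitrarily large modulus (`exists_exceptional`).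
-/

open Complex intervalIntegral

/-! ### The derivative of the price -/

theorem hasDerivAt_Phi (z : ℂ) :
    HasDerivAt Phi (((Real.sqrt (2 * Real.pi))⁻¹ : ℂ) * exp (-z ^ 2 / 2)) z := by
  have hd : Differentiable ℂ (fun z : ℂ => exp (-z ^ 2 / 2)) := by fun_prop
  obtain ⟨P, hP⟩ := hd.isExactOn_univ
  have key : Phi = fun y => 1 / 2 + ((Real.sqrt (2 * Real.pi))⁻¹ : ℂ) * (P y - P 0) := by
    funext y
    unfold Phi
    congr 2
    have hint : ∀ t ∈ Set.uIcc (0 : ℝ) 1,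
        HasDerivAt (fun t : ℝ => P ((t : ℂ) * y)) (y * exp (-((t : ℂ) * y) ^ 2 / 2)) t := by
      intro t _
      have h2 : HasDerivAt (fun t : ℝ => (t : ℂ) * y) y t := by
        simpa using (Complex.ofRealCLM.hasDerivAt (x := t)).mul_const y
      have := (hP ((t : ℂ) * y) trivial).comp t h2
      simpa [mul_comm, Function.comp_def] using this
    rw [intervalIntegral.integral_eq_sub_of_hasDerivAt hint
      (Continuous.intervalIntegrable (by fun_prop) _ _)]
    simp
  rw [key]
  exact (((hP z trivial).sub_const (P 0)).const_mul _).const_add (1 / 2)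

/-- The derivative of the price in the variable `w = 1 / σ`. The identity `F φ(d₊) = K φ(d₋)`
collapses the two terms into one without zeros. -/
theorem hasDerivAt_BS_inv (r F K T : ℝ) (hF : 0 < F) (hK : 0 < K) (hT : 0 < T)
    {w : ℂ} (hw : w ≠ 0) :
    HasDerivAt (fun w : ℂ => BS r F K T w⁻¹)
      ((-(Real.exp (-(r * T)) * (Real.sqrt (2 * Real.pi))⁻¹ * F *
          Real.exp (-(Real.log (F / K) / 2)) * Real.sqrt T : ℝ) : ℂ) / w ^ 2 *
        exp (-((Real.log (F / K) ^ 2 / (2 * T) : ℝ) : ℂ) * w ^ 2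
          - ((T / 8 : ℝ) : ℂ) / w ^ 2)) w := by
  set L := Real.log (F / K) with hL
  set τ := Real.sqrt T with hτ
  have hτ0 : 0 < τ := Real.sqrt_pos.2 hT
  have hTτ : T = τ ^ 2 := (Real.sq_sqrt hT.le).symm
  have hτc : (τ : ℂ) ≠ 0 := by exact_mod_cast hτ0.ne'
  have hFK : (F : ℂ) * exp (-(L / 2)) = K * exp (L / 2) := by
    have : F * Real.exp (-(L / 2)) = K * Real.exp (L / 2) := by
      have h1 : Real.exp (L / 2) * Real.exp (L / 2) = F / K := by
        rw [← Real.exp_add, add_halves, hL, Real.exp_log (by positivity)]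
      rw [Real.exp_neg]
      field_simp
      rw [pow_two, h1]
      field_simp
    exact_mod_cast congrArg (fun x : ℝ => (x : ℂ)) this
  have hp : HasDerivAt (fun w : ℂ => dPlus F K T w⁻¹) (L / τ - τ / (2 * w ^ 2)) w := by
    have h1 : HasDerivAt (fun w : ℂ => (L / τ : ℂ) * w + w⁻¹ * (τ / 2))
        (L / τ * 1 + -(w ^ 2)⁻¹ * (τ / 2)) w :=
      ((hasDerivAt_id w).const_mul _).add ((hasDerivAt_inv hw).mul_const _)
    convert h1 using 1
    · ext w
      simp only [dPlus, ← hL, ← hτ]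
      rw [div_mul_eq_div_div, div_inv_eq_mul]
      ring
    · field_simp
      ring
  have hm : HasDerivAt (fun w : ℂ => dMinus F K T w⁻¹) (L / τ + τ / (2 * w ^ 2)) w := by
    have h1 : HasDerivAt (fun w : ℂ => (L / τ : ℂ) * w - w⁻¹ * (τ / 2))
        (L / τ * 1 - -(w ^ 2)⁻¹ * (τ / 2)) w :=
      ((hasDerivAt_id w).const_mul _).sub ((hasDerivAt_inv hw).mul_const _)
    convert h1 using 1
    · ext w
      simp only [dMinus, ← hL, ← hτ]
      rw [div_mul_eq_div_div, div_inv_eq_mul]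
      ring
    · field_simp
      ring
  have h := ((((hasDerivAt_Phi _).comp w hp).const_mul (F : ℂ)).sub
    (((hasDerivAt_Phi _).comp w hm).const_mul (K : ℂ))).const_mul
      (Real.exp (-(r * T)) : ℂ)
  refine h.congr_deriv ?_
  have e1 : exp (-dPlus F K T w⁻¹ ^ 2 / 2) = exp (-(L / 2)) *
      exp (-((L ^ 2 / (2 * T) : ℝ) : ℂ) * w ^ 2 - ((T / 8 : ℝ) : ℂ) / w ^ 2) := by
    rw [← Complex.exp_add]
    congr 1
    simp only [dPlus, ← hL, ← hτ]
    rw [hTτ]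
    push_cast
    field_simp
    ring
  have e2 : exp (-dMinus F K T w⁻¹ ^ 2 / 2) = exp (L / 2) *
      exp (-((L ^ 2 / (2 * T) : ℝ) : ℂ) * w ^ 2 - ((T / 8 : ℝ) : ℂ) / w ^ 2) := by
    rw [← Complex.exp_add]
    congr 1
    simp only [dMinus, ← hL, ← hτ]
    rw [hTτ]
    push_cast
    field_simp
    ring
  rw [e1, e2]
  generalize exp (-((L ^ 2 / (2 * T) : ℝ) : ℂ) * w ^ 2 - ((T / 8 : ℝ) : ℂ) / w ^ 2) = X
  push_cast
  linear_combination (-(exp (-(r * T)) * (Real.sqrt (2 * Real.pi) : ℂ)⁻¹ * X *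
    (L / τ + τ / (2 * w ^ 2)))) * hFK.symm

/-! ### Zooming in on the diagonal ray -/

/-- The correction factor in the derivative of `t ↦ h (q + t / q)` relative to a pure exponential.
It is evaluated at `α = t / q ^ 2`, `β = t ^ 2 / q ^ 2`, `γ = 1 / (q + t / q) ^ 2` and tends to `1`
as these tend to `0`. -/
noncomputable def zoomFactor (b d : ℝ) (α β γ : ℂ) : ℂ :=
  ((1 + α) ^ 2)⁻¹ * exp (-b * β - d * γ)

/-- With `q = ω s` and `exp (-b q²) = 1`, the expansion `(q + t / q)² = q² + 2 t + t² / q²` turns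
`exp (-b w²)` into `exp (-2 b t)` times a factor close to `1`. -/
theorem hasDerivAt_zoom {h : ℂ → ℂ} {b d : ℝ} {C ω : ℂ}
    (H : ∀ w : ℂ, w ≠ 0 → HasDerivAt h (C / w ^ 2 * exp (-b * w ^ 2 - d / w ^ 2)) w)
    (hω : ω ^ 2 = I) {s : ℝ} (hs : 0 < s) (hphase : exp (-b * (I * s ^ 2)) = 1) {t : ℂ}
    (ht : 1 + t / (ω * s) ^ 2 ≠ 0) :
    HasDerivAt (fun t => h (ω * s + t / (ω * s)))
      (C / ω ^ 3 * (s ^ 3 : ℂ)⁻¹ * exp (-(2 * b) * t) *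
        zoomFactor b d (t / (ω * s) ^ 2) (t ^ 2 / (ω * s) ^ 2)
          (1 / (ω * s + t / (ω * s)) ^ 2)) t := by
  have hω0 : ω ≠ 0 := by
    rintro rfl
    simp [Complex.ext_iff] at hω
  have hs0 : (s : ℂ) ≠ 0 := by exact_mod_cast hs.ne'
  have hq0 : ω * s ≠ 0 := mul_ne_zero hω0 hs0
  have hw : ω * s + t / (ω * s) = ω * s * (1 + t / (ω * s) ^ 2) := by field_simp
  have hw0 : ω * s + t / (ω * s) ≠ 0 := hw ▸ mul_ne_zero hq0 ht
  have h1 : HasDerivAt (fun t : ℂ => ω * s + t / (ω * s)) (1 / (ω * s)) t :=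
    ((hasDerivAt_id t).div_const _).const_add _
  refine ((H _ hw0).comp t h1).congr_deriv ?_
  have e : exp (-b * (ω * s + t / (ω * s)) ^ 2 - d / (ω * s + t / (ω * s)) ^ 2) =
      exp (-(2 * b) * t) *
        exp (-b * (t ^ 2 / (ω * s) ^ 2) - d * (1 / (ω * s + t / (ω * s)) ^ 2)) := by
    refine Eq.trans ?_ ((congrArg (· * _) hphase).trans (one_mul _))
    simp only [← Complex.exp_add]
    congr 1
    have : (ω * s + t / (ω * s)) ^ 2 = I * s ^ 2 + 2 * t + t ^ 2 / (ω * s) ^ 2 := by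
      rw [← hω]
      field_simp
      ring
    rw [div_eq_mul_one_div (d : ℂ)]
    linear_combination (-(b : ℂ)) * this
  rw [e, zoomFactor]
  generalize exp (-b * (t ^ 2 / (ω * s) ^ 2) - d * (1 / (ω * s + t / (ω * s)) ^ 2)) = X
  rw [hw]
  generalize 1 + t / (ω * s) ^ 2 = Y at ht ⊢
  field_simp

/-- The correction factor is uniformly close to `1` on discs whose radius may grow like `log s`;
this growth is what allows re-centring at distance `c * log s`. -/
theorem eventually_zoomFactor_close {b d : ℝ} {ω : ℂ} (hω : ‖ω‖ = 1) (c R : ℝ) (hR : 0 ≤ R)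
    (hc : 0 ≤ c) {η : ℝ} (hη : 0 < η) :
    ∀ᶠ s : ℝ in Filter.atTop, ∀ t : ℂ, ‖t‖ ≤ R + c * Real.log s →
      1 + t / (ω * s) ^ 2 ≠ 0 ∧ s / 2 ≤ ‖ω * s + t / (ω * s)‖ ∧
      ‖zoomFactor b d (t / (ω * s) ^ 2) (t ^ 2 / (ω * s) ^ 2)
          (1 / (ω * s + t / (ω * s)) ^ 2) - 1‖ ≤ η := by
  have hcont : ContinuousAt
      (fun p : ℂ × ℂ × ℂ => zoomFactor b d p.1 p.2.1 p.2.2) (0, 0, 0) := by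
    unfold zoomFactor
    refine ContinuousAt.mul (ContinuousAt.inv₀ (by fun_prop) (by simp)) (by fun_prop)
  obtain ⟨δ, hδ, hΨ⟩ := Metric.continuousAt_iff.1 hcont η hη
  -- this quantity dominates the three arguments `t / q²`, `t² / q²`, `1 / w²`
  have hρ : Filter.Tendsto (fun s : ℝ => 4 * ((1 + R) / s + c * (Real.log s / s)) ^ 2)
      Filter.atTop (nhds 0) := by
    have h1 : Filter.Tendsto (fun s : ℝ => (1 + R) / s) Filter.atTop (nhds 0) :=
      Filter.Tendsto.const_div_atTop Filter.tendsto_id _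
    have h2 : Filter.Tendsto (fun s : ℝ => Real.log s / s) Filter.atTop (nhds 0) :=
      Real.isLittleO_log_id_atTop.tendsto_div_nhds_zero
    simpa using ((h1.add (h2.const_mul c)).pow 2).const_mul 4
  filter_upwards [hρ.eventually (gt_mem_nhds (lt_min hδ (by norm_num : (0 : ℝ) < 1 / 2))),
    Filter.eventually_ge_atTop 1] with s hs hs1 t ht
  have hs0 : 0 < s := by linarith
  have hlog : 0 ≤ c * Real.log s := mul_nonneg hc (Real.log_nonneg hs1)
  set m := 1 + R + c * Real.log s with hm
  have hm1 : 1 ≤ m := by linarith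
  have hmm : m ≤ m ^ 2 := by nlinarith
  have hρeq : 4 * ((1 + R) / s + c * (Real.log s / s)) ^ 2 = 4 * m ^ 2 / s ^ 2 := by
    rw [hm]
    field_simp
  rw [hρeq] at hs
  obtain ⟨hsδ, hsh⟩ := lt_min_iff.1 hs
  have hq : ‖(ω * s) ^ 2‖ = s ^ 2 := by
    rw [norm_pow, norm_mul, hω, Complex.norm_real, Real.norm_of_nonneg hs0.le, one_mul]
  have hq1 : ‖ω * s‖ = s := by
    rw [norm_mul, hω, Complex.norm_real, Real.norm_of_nonneg hs0.le, one_mul]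
  have hα : ‖t / (ω * s) ^ 2‖ ≤ 4 * m ^ 2 / s ^ 2 := by
    rw [norm_div, hq]
    gcongr
    nlinarith
  have hβ : ‖t ^ 2 / (ω * s) ^ 2‖ ≤ 4 * m ^ 2 / s ^ 2 := by
    rw [norm_div, hq, norm_pow]
    gcongr
    nlinarith [norm_nonneg t]
  have hone : 1 / 2 ≤ ‖1 + t / (ω * s) ^ 2‖ := by
    have := norm_sub_norm_le (1 : ℂ) (-(t / (ω * s) ^ 2))
    rw [norm_neg, norm_one, sub_neg_eq_add] at this
    linarith
  have hne : 1 + t / (ω * s) ^ 2 ≠ 0 := by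
    intro h0
    rw [h0, norm_zero] at hone
    norm_num at hone
  have hqne : ω * s ≠ 0 := by
    rw [← norm_pos_iff, hq1]
    exact hs0
  have hω0 : ω ≠ 0 := left_ne_zero_of_mul hqne
  have hsc : (s : ℂ) ≠ 0 := right_ne_zero_of_mul hqne
  have hw : ω * s + t / (ω * s) = ω * s * (1 + t / (ω * s) ^ 2) := by field_simp
  have hwn : s / 2 ≤ ‖ω * s + t / (ω * s)‖ := by
    rw [hw, norm_mul, hq1]
    nlinarith
  have hγ : ‖1 / (ω * s + t / (ω * s)) ^ 2‖ ≤ 4 * m ^ 2 / s ^ 2 := by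
    rw [norm_div, norm_one, norm_pow]
    calc 1 / ‖ω * s + t / (ω * s)‖ ^ 2 ≤ 1 / (s / 2) ^ 2 := by gcongr
      _ = 4 * 1 / s ^ 2 := by field_simp; norm_num
      _ ≤ _ := by gcongr; nlinarith
  refine ⟨hne, hwn, ?_⟩
  have := @hΨ (t / (ω * s) ^ 2, t ^ 2 / (ω * s) ^ 2, 1 / (ω * s + t / (ω * s)) ^ 2) (by
    simp only [Prod.dist_eq, dist_zero_right]
    exact max_lt (hα.trans_lt hsδ) (max_lt (hβ.trans_lt hsδ) (hγ.trans_lt hsδ)))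
  simpa [zoomFactor, dist_eq_norm] using this.le

/-- On the ray `arg w = arg ω` the exponential has modulus one, so that `|h'| ≤ ‖C‖ / s²` is
integrable. -/
theorem bounded_on_ray {h : ℂ → ℂ} {b d : ℝ} {C ω : ℂ}
    (H : ∀ w : ℂ, w ≠ 0 → HasDerivAt h (C / w ^ 2 * exp (-b * w ^ 2 - d / w ^ 2)) w)
    (hω : ω ^ 2 = I) (hω1 : ‖ω‖ = 1) {s : ℝ} (hs : 1 ≤ s) :
    ‖h (ω * s) - h ω‖ ≤ ‖C‖ := by
  have hder : ∀ x : ℝ, 0 < x → HasDerivAt (fun x : ℝ => h (ω * x) - h ω)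
      (C / (ω * x) ^ 2 * exp (-b * (ω * x) ^ 2 - d / (ω * x) ^ 2) * ω) x := by
    intro x hx
    have h1 : HasDerivAt (fun x : ℝ => ω * (x : ℂ)) ω x := by
      simpa using (Complex.ofRealCLM.hasDerivAt (x := x)).const_mul ω
    have hne : ω * x ≠ 0 := by
      rw [← norm_pos_iff, norm_mul, hω1, Complex.norm_real, Real.norm_of_nonneg hx.le]
      simpa using hx
    exact ((H _ hne).comp x h1).sub_const _
  have hB : ∀ x : ℝ, 0 < x → HasDerivAt (fun x : ℝ => ‖C‖ * (1 - x⁻¹)) (‖C‖ * (x ^ 2)⁻¹) x := by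
    intro x hx
    have := ((hasDerivAt_inv hx.ne').const_sub 1).const_mul ‖C‖
    simpa using this
  have key := image_norm_le_of_norm_deriv_right_le_deriv_boundary'
    (f := fun x : ℝ => h (ω * x) - h ω) (a := 1) (b := s)
    (fun x hx => (hder x (by linarith [hx.1])).continuousAt.continuousWithinAt)
    (fun x hx => (hder x (by linarith [hx.1])).hasDerivWithinAt)
    (B := fun x : ℝ => ‖C‖ * (1 - x⁻¹)) (B' := fun x => ‖C‖ * (x ^ 2)⁻¹) (by simp)
    (fun x hx => (hB x (by linarith [hx.1])).continuousAt.continuousWithinAt)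
    (fun x hx => (hB x (by linarith [hx.1])).hasDerivWithinAt)
    (fun x hx => by
      have hx0 : 0 < x := by linarith [hx.1]
      have hexp : ‖exp (-b * (ω * x) ^ 2 - d / (ω * x) ^ 2)‖ = 1 := by
        have : -b * (ω * x) ^ 2 - d / (ω * x) ^ 2 = ((-b * x ^ 2 + d / x ^ 2 : ℝ) : ℂ) * I := by
          have hx0' : (x : ℂ) ≠ 0 := by exact_mod_cast hx0.ne'
          rw [mul_pow, hω]
          push_cast
          field_simp
          rw [I_sq]
          ring
        rw [this, Complex.norm_exp_ofReal_mul_I]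
      rw [norm_mul, norm_mul, hexp, hω1, norm_div, norm_pow, norm_mul, hω1, Complex.norm_real,
        Real.norm_of_nonneg hx0.le]
      simp [div_eq_mul_inv])
    (x := s) ⟨hs, le_rfl⟩
  refine key.trans ?_
  have : 0 ≤ s⁻¹ := by positivity
  nlinarith [norm_nonneg C]

/-- Moving from `q = ω s` to the new centre changes `h` by a bounded amount: the derivative is at
most `2 ‖C‖ s⁻³ exp (2 b x)` along the way, and the path stops when `exp (2 b x) = s ^ 3`. -/
theorem bounded_along_shift {h : ℂ → ℂ} {b d : ℝ} (hb : 0 < b) {C ω : ℂ}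
    (H : ∀ w : ℂ, w ≠ 0 → HasDerivAt h (C / w ^ 2 * exp (-b * w ^ 2 - d / w ^ 2)) w)
    (hω : ω ^ 2 = I) (hω1 : ‖ω‖ = 1) :
    ∀ᶠ s : ℝ in Filter.atTop, exp (-b * (I * s ^ 2)) = 1 →
      ‖h (ω * s + ((-(3 / (2 * b) * Real.log s) : ℝ) : ℂ) / (ω * s)) - h (ω * s)‖
        ≤ ‖C‖ / b := by
  filter_upwards [eventually_zoomFactor_close (b := b) (d := d) hω1 (3 / (2 * b)) 0 le_rfl
    (by positivity) one_pos, Filter.eventually_ge_atTop 1] with s hz hs1 hphase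
  have hs0 : 0 < s := by linarith
  set τ := 3 / (2 * b) * Real.log s with hτ
  have hτ0 : 0 ≤ τ := mul_nonneg (by positivity) (Real.log_nonneg hs1)
  have hsexp : Real.exp (2 * b * τ) = s ^ 3 := by
    have : 2 * b * τ = (3 : ℕ) * Real.log s := by
      rw [hτ]; push_cast; field_simp
    rw [this, Real.exp_nat_mul, Real.exp_log hs0]
  have hbd : ∀ x ∈ Set.Icc 0 τ, ‖((-x : ℝ) : ℂ)‖ ≤ 0 + τ := by
    intro x hx
    rw [Complex.norm_real, norm_neg, Real.norm_of_nonneg hx.1]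
    linarith [hx.2]
  set D : ℝ → ℂ := fun x => C / ω ^ 3 * (s ^ 3 : ℂ)⁻¹ * exp (-(2 * b) * ((-x : ℝ) : ℂ)) *
        zoomFactor b d (((-x : ℝ) : ℂ) / (ω * s) ^ 2) (((-x : ℝ) : ℂ) ^ 2 / (ω * s) ^ 2)
          (1 / (ω * s + ((-x : ℝ) : ℂ) / (ω * s)) ^ 2) with hD
  have hder : ∀ x ∈ Set.Icc 0 τ, HasDerivAt
      (fun x : ℝ => h (ω * s + ((-x : ℝ) : ℂ) / (ω * s)) - h (ω * s)) (-D x) x := by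
    intro x hx
    have h1 : HasDerivAt (fun x : ℝ => ((-x : ℝ) : ℂ)) (-1) x := by
      simpa using (hasDerivAt_neg x).ofReal_comp
    have h2 := (hasDerivAt_zoom H hω hs0 hphase (hz _ (hbd x hx)).1).comp x h1
    simpa [Function.comp_def, hD] using h2.sub_const (h (ω * s))
  have hB : ∀ x : ℝ, HasDerivAt
      (fun x : ℝ => ‖C‖ / b * ((s ^ 3)⁻¹ * (Real.exp (2 * b * x) - 1)))
      (2 * ‖C‖ * ((s ^ 3)⁻¹ * Real.exp (2 * b * x))) x := by
    intro x
    have h1 : HasDerivAt (fun x : ℝ => Real.exp (2 * b * x)) (Real.exp (2 * b * x) * (2 * b)) x := by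
      simpa using ((hasDerivAt_id x).const_mul (2 * b)).exp
    refine (((h1.sub_const 1).const_mul _).const_mul _).congr_deriv ?_
    field_simp
  have key := image_norm_le_of_norm_deriv_right_le_deriv_boundary
    (fun x hx => (hder x hx).continuousAt.continuousWithinAt)
    (fun x hx => (hder x (Set.Ico_subset_Icc_self hx)).hasDerivWithinAt)
    (by simp) hB
    (fun x hx => by
      have hz' := (hz _ (hbd x (Set.Ico_subset_Icc_self hx))).2.2
      rw [norm_neg, hD]
      set Z := zoomFactor b d (((-x : ℝ) : ℂ) / (ω * s) ^ 2) (((-x : ℝ) : ℂ) ^ 2 / (ω * s) ^ 2)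
          (1 / (ω * s + ((-x : ℝ) : ℂ) / (ω * s)) ^ 2)
      have hZ2 : ‖Z‖ ≤ 2 := by
        have := norm_sub_norm_le Z 1
        rw [norm_one] at this
        linarith
      have hE : ‖exp (-(2 * b) * ((-x : ℝ) : ℂ))‖ = Real.exp (2 * b * x) := by
        rw [Complex.norm_exp]
        congr 1
        simp
      simp only [norm_mul, norm_div, norm_inv, norm_pow, hω1, hE, Complex.norm_real,
        Real.norm_of_nonneg hs0.le]
      calc ‖C‖ / 1 ^ 3 * (s ^ 3)⁻¹ * Real.exp (2 * b * x) * ‖Z‖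
          ≤ ‖C‖ / 1 ^ 3 * (s ^ 3)⁻¹ * Real.exp (2 * b * x) * 2 := by gcongr
        _ = _ := by ring)
    (x := τ) ⟨hτ0, le_rfl⟩
  refine key.trans ?_
  rw [hsexp]
  have : (s ^ 3)⁻¹ * (s ^ 3 - 1) ≤ 1 := by
    rw [mul_sub, inv_mul_cancel₀ (by positivity)]
    have : 0 ≤ (s ^ 3)⁻¹ := by positivity
    linarith
  exact mul_le_of_le_one_right (by positivity) this

/-! ### Picard behaviour at infinity -/

/-- A function with derivative `C w⁻² exp (-b w² - d / w²)` takes every value, with at most one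
exception, outside every disc: a subsequence of its zooms converges locally uniformly to
`G x = L + κ / (2 b) * (1 - exp (-2 b x))`, which omits only `L + κ / (2 b)`, and values of `G`
are inherited by the zooms through the quantitative open mapping theorem. -/
theorem exists_exceptional {h : ℂ → ℂ} {b d : ℝ} (hb : 0 < b) {C : ℂ} (hC : C ≠ 0)
    (H : ∀ w : ℂ, w ≠ 0 → HasDerivAt h (C / w ^ 2 * exp (-b * w ^ 2 - d / w ^ 2)) w) :
    ∃ E : Set ℂ, E.Subsingleton ∧ ∀ V : ℂ, V ∉ E → ∀ M : ℝ, ∃ w : ℂ, M < ‖w‖ ∧ h w = V := by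
  obtain ⟨ω, hω⟩ : ∃ ω : ℂ, ω ^ 2 = I := IsAlgClosed.exists_pow_nat_eq I two_pos
  have hω1 : ‖ω‖ = 1 := by
    have : ‖ω‖ ^ 2 = 1 := by rw [← norm_pow, hω, norm_I]
    exact (pow_eq_one_iff_of_nonneg (norm_nonneg _) two_ne_zero).1 this
  have hω0 : ω ≠ 0 := by
    rw [← norm_pos_iff, hω1]
    exact one_pos
  -- radii on the diagonal ray at which `exp (-b w²) = 1`
  set S : ℕ → ℝ := fun n => Real.sqrt (2 * Real.pi / b * n) with hS
  have hStop : Filter.Tendsto S Filter.atTop Filter.atTop :=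
    Real.tendsto_sqrt_atTop.comp
      (tendsto_natCast_atTop_atTop.const_mul_atTop (by positivity))
  have hphase : ∀ n, exp (-b * (I * (S n : ℂ) ^ 2)) = 1 := by
    intro n
    have h1 : (S n) ^ 2 = 2 * Real.pi / b * n := Real.sq_sqrt (by positivity)
    have h2 : (S n : ℂ) ^ 2 = 2 * Real.pi / b * n := by
      rw [← Complex.ofReal_pow, h1]
      push_cast
      rfl
    have hbc : (b : ℂ) ≠ 0 := by exact_mod_cast hb.ne'
    rw [h2, Complex.exp_eq_one_iff]
    refine ⟨-n, ?_⟩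
    push_cast
    field_simp
  set c := 3 / (2 * b) with hc
  have hc0 : 0 ≤ c := by positivity
  set κ := C / ω ^ 3 with hκ
  have hκ0 : κ ≠ 0 := div_ne_zero hC (pow_ne_zero _ hω0)
  have hbc : (b : ℂ) ≠ 0 := by exact_mod_cast hb.ne'
  -- the zooms of `h`: scale `1 / (ω s)`, re-centred where `|exp (-b w²)|` is about `s ^ 3`
  set g : ℕ → ℂ → ℂ := fun n x =>
    h (ω * S n + (x + ((-(c * Real.log (S n)) : ℝ) : ℂ)) / (ω * S n)) with hg
  -- on each disc the zooms have derivative close to `κ exp (-2 b x)`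
  have hgder : ∀ R η : ℝ, 0 ≤ R → 0 < η → ∀ᶠ n in Filter.atTop, ∀ x : ℂ, ‖x‖ ≤ R →
      S n / 2 ≤ ‖ω * S n + (x + ((-(c * Real.log (S n)) : ℝ) : ℂ)) / (ω * S n)‖ ∧
      ∃ Z : ℂ, ‖Z - 1‖ ≤ η ∧ HasDerivAt (g n) (κ * exp (-(2 * b) * x) * Z) x := by
    intro R η hR hη
    filter_upwards [hStop.eventually (eventually_zoomFactor_close (b := b) (d := d) hω1 c R hR
      hc0 hη), hStop.eventually_ge_atTop 1] with n hn hn1 x hx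
    have hs0 : 0 < S n := by linarith
    have hlog : 0 ≤ c * Real.log (S n) := mul_nonneg hc0 (Real.log_nonneg hn1)
    set t : ℂ := x + ((-(c * Real.log (S n)) : ℝ) : ℂ) with ht
    have htn : ‖t‖ ≤ R + c * Real.log (S n) := by
      refine (norm_add_le _ _).trans ?_
      rw [Complex.norm_real, norm_neg, Real.norm_of_nonneg hlog]
      gcongr
    obtain ⟨h1, h2, h3⟩ := hn t htn
    refine ⟨h2, _, h3, ?_⟩
    have h4 := (hasDerivAt_zoom H hω hs0 (hphase n) h1).comp_add_const x _
    refine h4.congr_deriv ?_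
    have e : exp (-(2 * b) * t) = exp (-(2 * b) * x) * (S n : ℂ) ^ 3 := by
      rw [ht, mul_add, Complex.exp_add]
      congr 1
      have h5 : Real.exp ((3 : ℕ) * Real.log (S n)) = S n ^ 3 := by
        rw [Real.exp_nat_mul, Real.exp_log hs0]
      rw [← Complex.ofReal_pow, ← h5, Complex.ofReal_exp]
      congr 1
      rw [hc]
      push_cast
      field_simp
    have hsc : (S n : ℂ) ≠ 0 := by exact_mod_cast hs0.ne'
    rw [e, hκ]
    generalize zoomFactor b d _ _ _ = Z
    field_simp
  -- boundedness of the centre values, and a convergent subsequence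
  have hbdd : ∀ᶠ n in Filter.atTop, ‖g n 0‖ ≤ ‖h ω‖ + ‖C‖ + ‖C‖ / b := by
    filter_upwards [hStop.eventually (bounded_along_shift hb H hω hω1),
      hStop.eventually_ge_atTop 1] with n hn hn1
    have h1 := hn (hphase n)
    have h2 := bounded_on_ray H hω hω1 hn1
    have h3 : g n 0 = (g n 0 - h (ω * S n)) + (h (ω * S n) - h ω) + h ω := by ring
    rw [h3]
    refine (norm_add₃_le).trans ?_
    have h4 : ‖g n 0 - h (ω * S n)‖ ≤ ‖C‖ / b := by simpa [hg, hc] using h1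
    linarith
  obtain ⟨L, -, φ, hφ, hL⟩ := tendsto_subseq_of_frequently_bounded
    (Metric.isBounded_closedBall (x := (0 : ℂ)) (r := ‖h ω‖ + ‖C‖ + ‖C‖ / b))
    (x := fun n => g n 0) (by simpa using hbdd.frequently)
  refine ⟨{L + κ / (2 * b)}, Set.subsingleton_singleton, fun V hV M => ?_⟩
  -- the limit function `G`, and a point `x₀` with `G x₀ = V`
  set G : ℂ → ℂ := fun x => L + κ / (2 * b) * (1 - exp (-(2 * b) * x)) with hG
  have hGder : ∀ x, HasDerivAt G (κ * exp (-(2 * b) * x)) x := by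
    intro x
    have h1 : HasDerivAt (fun x : ℂ => exp (-(2 * b) * x))
        (exp (-(2 * b) * x) * (-(2 * b) * 1)) x := ((hasDerivAt_id x).const_mul _).cexp
    refine (((h1.const_sub 1).const_mul _).const_add L).congr_deriv ?_
    field_simp
  have hV' : 1 - (V - L) * (2 * b) / κ ≠ 0 := by
    intro h0
    apply hV
    rw [Set.mem_singleton_iff]
    field_simp at h0
    field_simp
    linear_combination (-1 : ℂ) * h0
  obtain ⟨x₀, hx₀⟩ : ∃ x₀, G x₀ = V := by
    refine ⟨Complex.log (1 - (V - L) * (2 * b) / κ) / (-(2 * b)), ?_⟩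
    simp only [hG]
    rw [mul_div_cancel₀ _ (by simpa using hbc), Complex.exp_log hV']
    field_simp
    ring
  -- `G - V` is bounded below on the circle of radius `1 / (4 b)` about `x₀`:
  -- there `2 b (x - x₀)` has norm `1 / 2`
  set r : ℝ := 1 / (4 * b) with hr
  have hr0 : 0 < r := by positivity
  set m : ℝ := ‖κ / (2 * b) * exp (-(2 * b) * x₀)‖ / 4 with hm
  have hm0 : 0 < m := by
    have : κ / (2 * b) * exp (-(2 * b) * x₀) ≠ 0 :=
      mul_ne_zero (div_ne_zero hκ0 (by simpa using hbc)) (exp_ne_zero _)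
    have := norm_pos_iff.2 this
    positivity
  have hsphere : ∀ x ∈ Metric.sphere x₀ r, m ≤ ‖G x - V‖ := by
    intro x hx
    rw [mem_sphere_iff_norm] at hx
    set y : ℂ := -(2 * b) * (x - x₀) with hy
    have hyn : ‖y‖ = 1 / 2 := by
      rw [hy, norm_mul, hx, norm_neg, norm_mul, Complex.norm_real, Real.norm_of_nonneg hb.le, hr]
      norm_num
      field_simp
      norm_num
    have h1 : G x - V = -(κ / (2 * b) * exp (-(2 * b) * x₀)) * (exp y - 1) := by
      have : exp (-(2 * b) * x) = exp (-(2 * b) * x₀) * exp y := by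
        rw [← Complex.exp_add, hy]
        congr 1
        ring
      rw [← hx₀]
      simp only [hG]
      rw [this]
      ring
    have h2 : 1 / 4 ≤ ‖exp y - 1‖ := by
      have h3 := Complex.norm_exp_sub_one_sub_id_le (x := y) (by rw [hyn]; norm_num)
      have h4 := norm_sub_norm_le y (-(exp y - 1 - y))
      rw [norm_neg, sub_neg_eq_add, add_sub_cancel] at h4
      rw [hyn] at h3 h4
      linarith
    rw [h1, norm_mul, norm_neg, hm]
    nlinarith [norm_nonneg (κ / (2 * b) * exp (-(2 * b) * x₀))]
  set R := ‖x₀‖ + r with hR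
  have hR0 : 0 < R := by positivity
  set A := ‖κ‖ * Real.exp (2 * b * R) with hA
  have hA0 : 0 < A := mul_pos (norm_pos_iff.2 hκ0) (Real.exp_pos _)
  set η := min (1 / 2) (m / 16 / (A * R)) with hη
  have hη0 : 0 < η := lt_min (by norm_num) (by positivity)
  have hηA : A * η * R ≤ m / 16 := by
    have : η ≤ m / 16 / (A * R) := min_le_right _ _
    rw [le_div_iff₀ (by positivity)] at this
    linarith
  have hclose := hL.eventually (Metric.closedBall_mem_nhds L (by positivity : 0 < m / 16))
  obtain ⟨n, hn1, hn2, hn3⟩ := ((hφ.tendsto_atTop.eventually (hgder R η hR0.le hη0)).and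
    (hclose.and ((hStop.comp hφ.tendsto_atTop).eventually_gt_atTop (2 * M)))).exists
  set N := φ n with hN
  have hn2 : ‖g N 0 - L‖ ≤ m / 16 := by
    simpa [dist_eq_norm] using hn2
  have hn3 : 2 * M < S N := hn3
  -- on the disc of radius `R`, `g N` is within `m / 8` of `G`
  have hgG : ∀ x : ℂ, ‖x‖ ≤ R → ‖g N x - G x‖ ≤ m / 8 := by
    intro x hx
    choose! Z hZ1 hZ2 using fun y hy => (hn1 y hy).2
    have hmv := Convex.norm_image_sub_le_of_norm_hasDerivWithin_le
      (f := fun y => g N y - G y) (s := Metric.closedBall (0 : ℂ) R) (x := 0) (y := x)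
      (C := A * η)
      (fun y hy => ((hZ2 y (by simpa using hy)).sub (hGder y)).hasDerivWithinAt)
      (fun y hy => by
        have hy' : ‖y‖ ≤ R := by simpa using hy
        have e : κ * exp (-(2 * b) * y) * Z y - κ * exp (-(2 * b) * y) =
          κ * exp (-(2 * b) * y) * (Z y - 1) := by ring
        rw [e, norm_mul, norm_mul, hA]
        have h1 : ‖exp (-(2 * b) * y)‖ ≤ Real.exp (2 * b * R) := by
          rw [Complex.norm_exp]
          apply Real.exp_le_exp.2
          refine (Complex.re_le_norm _).trans ?_
          rw [norm_mul, norm_neg, norm_mul, Complex.norm_real, Real.norm_of_nonneg hb.le]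
          norm_num
          gcongr
        have := hZ1 y hy'
        gcongr)
      (convex_closedBall _ _) (by simpa using hR0.le) (by simpa using hx)
    have hG0 : G 0 = L := by simp [hG]
    simp only [hG0, sub_zero] at hmv
    have h2 : A * η * ‖x‖ ≤ A * η * R := by gcongr
    have h3 : g N x - G x = (g N x - G x - (g N 0 - L)) + (g N 0 - L) := by ring
    rw [h3]
    refine (norm_add_le _ _).trans ?_
    linarith
  have hin : ∀ x ∈ Metric.closedBall x₀ r, ‖x‖ ≤ R := by
    intro x hx
    rw [mem_closedBall_iff_norm] at hx
    have := norm_add_le x₀ (x - x₀)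
    rw [add_sub_cancel] at this
    linarith
  have hx₀R : ‖x₀‖ ≤ R := by linarith
  have hgx₀ : ‖g N x₀ - V‖ ≤ m / 8 := hx₀ ▸ hgG x₀ hx₀R
  have hball := DiffContOnCl.ball_subset_image_closedBall (f := g N) (z₀ := x₀) (ε := m / 2)
    (r := r)
    (DifferentiableOn.diffContOnCl (by
      rw [closure_ball _ hr0.ne']
      intro x hx
      obtain ⟨Z, -, hZ⟩ := (hn1 x (hin x hx)).2
      exact hZ.differentiableAt.differentiableWithinAt)) hr0
    (fun x hx => by
      have h1 := hsphere x hx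
      have h2 := hgG x (hin x (Metric.sphere_subset_closedBall hx))
      have h3 : G x - V = (g N x - g N x₀) - (g N x - G x) + (g N x₀ - V) := by ring
      rw [h3] at h1
      have h4 := norm_add_le ((g N x - g N x₀) - (g N x - G x)) (g N x₀ - V)
      have h5 := norm_sub_le (g N x - g N x₀) (g N x - G x)
      linarith)
    (by
      obtain ⟨Z, hZ1, hZ⟩ := (hn1 x₀ hx₀R).2
      have hZ0 : Z ≠ 0 := by
        rintro rfl
        have : η ≤ 1 / 2 := min_le_left _ _
        rw [zero_sub, norm_neg, norm_one] at hZ1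
        linarith
      exact (hZ.eventually_ne (mul_ne_zero (mul_ne_zero hκ0 (exp_ne_zero _)) hZ0)).frequently
        |>.filter_mono nhdsWithin_le_nhds)
  obtain ⟨x, hx, hxV⟩ := hball (show V ∈ Metric.ball (g N x₀) (m / 2 / 2) by
    rw [mem_ball_iff_norm, norm_sub_rev]
    linarith)
  exact ⟨_, lt_of_lt_of_le (by linarith) (hn1 x (hin x hx)).1, hxV⟩

/-- great-Picard-type behaviour at `σ = 0`: there is an exceptional set
`E ⊆ ℂ` with at most one point such that for every `V ∉ E` and every `ε > 0`, the
implied-volatility equation `f(σ) = V` has infinitely many solutions with `0 < ‖σ‖ < ε`. -/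
theorem BS_infinitely_many_implied_volatilities (r F K T : ℝ)
    (hF : 0 < F) (hK : 0 < K) (hT : 0 < T) (hFK : F ≠ K) :
    ∃ E : Set ℂ, E.Subsingleton ∧
      ∀ V : ℂ, V ∉ E → ∀ ε : ℝ, 0 < ε →
        {σ : ℂ | 0 < ‖σ‖ ∧ ‖σ‖ < ε ∧ BS r F K T σ = V}.Infinite := by
  have hL : Real.log (F / K) ≠ 0 :=
    Real.log_ne_zero_of_pos_of_ne_one (div_pos hF hK) fun h => hFK ((div_eq_one_iff_eq hK.ne').1 h)
  have hb : 0 < Real.log (F / K) ^ 2 / (2 * T) := by positivity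
  obtain ⟨E, hE, hE'⟩ := exists_exceptional hb
    (C := (-(Real.exp (-(r * T)) * (Real.sqrt (2 * Real.pi))⁻¹ * F *
          Real.exp (-(Real.log (F / K) / 2)) * Real.sqrt T : ℝ) : ℂ))
    (by
      rw [neg_ne_zero, Complex.ofReal_ne_zero]
      positivity)
    (fun w hw => hasDerivAt_BS_inv r F K T hF hK hT hw)
  refine ⟨E, hE, fun V hV ε hε => ?_⟩
  rw [← Set.not_finite]
  intro hfin
  -- a finite solution set would stay away from `0`
  obtain ⟨δ, hδ, hδ'⟩ : ∃ δ : ℝ, 0 < δ ∧ ∀ σ ∈ {σ : ℂ | 0 < ‖σ‖ ∧ ‖σ‖ < ε ∧ BS r F K T σ = V},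
      δ ≤ ‖σ‖ := by
    rcases Set.eq_empty_or_nonempty {σ : ℂ | 0 < ‖σ‖ ∧ ‖σ‖ < ε ∧ BS r F K T σ = V} with h0 | h0
    · exact ⟨1, one_pos, fun σ hσ => absurd (h0 ▸ hσ) (Set.notMem_empty σ)⟩
    · obtain ⟨σ₀, hσ₀, hmin⟩ := Set.exists_min_image _ (fun σ : ℂ => ‖σ‖) hfin h0
      exact ⟨‖σ₀‖, hσ₀.1, hmin⟩
  obtain ⟨w, hw, hwV⟩ := hE' V hV (max ε⁻¹ δ⁻¹)
  obtain ⟨hw1, hw2⟩ := max_lt_iff.1 hw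
  have hw0 : 0 < ‖w‖ := (inv_pos.2 hε).trans hw1
  have hlt : ‖w⁻¹‖ < δ := by
    rw [norm_inv]
    exact inv_lt_of_inv_lt₀ hδ hw2
  refine absurd (hδ' w⁻¹ ⟨?_, ?_, hwV⟩) (not_le.2 hlt)
  · rw [norm_inv]
    exact inv_pos.2 hw0
  · rw [norm_inv]
    exact inv_lt_of_inv_lt₀ hε hw1
end
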